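/- For every nonnegative integer m (with m ≥ 1 where an index m−1 occurs), the following identities of polynomials with rational coefficients hold: 𝒬_{2m}(x) = P_m(x)·𝒫_m(x); 𝒬_{2m+1}(x) = Q_{m+1}(x)·𝒬_m(x); and Q_m(x)² = Q_{2m}(x) + 2. -/

import Mathlib

open Polynomial Finset

/-- `P_m(x) = Σ_{k=0}^{m} ((2m+1)/(2k+1))·binom(m+k,2k)·x^k`. -/
noncomputable def Ppoly (m : ℕ) : Polynomial ℚ :=
  ∑ k ∈ Finset.range (m + 1),
    Polynomial.C ((2 * m + 1 : ℚ) / (2 * k + 1) * (Nat.choose (m + k) (2 * k))) * Polynomial.X ^ k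

/-- `Q_m(x) = 2 + Σ_{k=1}^{m} (m/k)·binom(m+k−1,2k−1)·x^k`. -/
noncomputable def Qpoly (m : ℕ) : Polynomial ℚ :=
  Polynomial.C 2 + ∑ k ∈ Finset.Icc 1 m,
    Polynomial.C ((m : ℚ) / k * (Nat.choose (m + k - 1) (2 * k - 1))) * Polynomial.X ^ k

/-- `𝒫_m(x) = Σ_{k=0}^{m} binom(m+k,2k)·x^k`. -/
noncomputable def calP (m : ℕ) : Polynomial ℚ :=
  ∑ k ∈ Finset.range (m + 1),
    Polynomial.C ((Nat.choose (m + k) (2 * k) : ℚ)) * Polynomial.X ^ k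

/-- `𝒬_m(x) = Σ_{k=0}^{m} binom(m+k+1,2k+1)·x^k`. -/
noncomputable def calQ (m : ℕ) : Polynomial ℚ :=
  ∑ k ∈ Finset.range (m + 1),
    Polynomial.C ((Nat.choose (m + k + 1) (2 * k + 1) : ℚ)) * Polynomial.X ^ k

/-!
Shifted by `x ↦ x + 2`, the rescaled Chebyshev polynomials `S` and `C` have binomial coefficients:
`𝒬_m(x) = S_m(x + 2)`, `Q_m(x) = C_m(x + 2)`, and `𝒫_m`, `P_m` are the shifts of `S_m - S_{m-1}`
and `S_m + S_{m-1}`. The factor `m / k` in `Q_m` comes from `C_m' = m S_{m-1}`. The three identities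
are then the duplication formulas of Chebyshev polynomials.
-/

section Chebyshev

variable (R : Type*) [CommRing R]

theorem chebyshev_C_add_one_eq_S_sub_S (n : ℤ) :
    Chebyshev.C R (n + 1) = Chebyshev.S R (n + 1) - Chebyshev.S R (n - 1) := by
  linear_combination Chebyshev.S_add_one R n - Chebyshev.S_eq_X_mul_S_add_C R n

theorem chebyshev_S_add (m n : ℤ) :
    Chebyshev.S R (m + n) =
      Chebyshev.S R m * Chebyshev.S R n - Chebyshev.S R (m - 1) * Chebyshev.S R (n - 1) := by
  induction n using Chebyshev.induct with
  | zero => simp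
  | one => simp [Chebyshev.S_add_one, mul_comm]
  | add_two n ih₁ ih₂ =>
    have hmn := Chebyshev.S_add_two R (m + n)
    have hn := Chebyshev.S_add_two R n
    have hn' := Chebyshev.S_add_one R n
    linear_combination (norm := ring_nf)
      hmn + X * ih₁ - ih₂ - Chebyshev.S R m * hn + Chebyshev.S R (m - 1) * hn'
  | neg_add_one n ih₁ ih₂ =>
    have hmn := Chebyshev.S_sub_one R (m - n)
    have hn := Chebyshev.S_sub_one R (-n)
    have hn' := Chebyshev.S_sub_two R (-n)
    linear_combination (norm := ring_nf)
      hmn + X * ih₁ - ih₂ - Chebyshev.S R m * hn + Chebyshev.S R (m - 1) * hn'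

theorem chebyshev_S_two_mul (n : ℤ) :
    Chebyshev.S R (2 * n) =
      (Chebyshev.S R n + Chebyshev.S R (n - 1)) * (Chebyshev.S R n - Chebyshev.S R (n - 1)) := by
  rw [two_mul, chebyshev_S_add]
  ring

theorem chebyshev_S_two_mul_add_one (n : ℤ) :
    Chebyshev.S R (2 * n + 1) = Chebyshev.C R (n + 1) * Chebyshev.S R n := by
  rw [two_mul, add_assoc, chebyshev_S_add, add_sub_cancel_right, chebyshev_C_add_one_eq_S_sub_S]
  ring

theorem chebyshev_C_sq (n : ℤ) : Chebyshev.C R n ^ 2 = Chebyshev.C R (2 * n) + 2 := by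
  rw [sq, Chebyshev.C_mul_C, sub_self, Chebyshev.C_zero, two_mul]

theorem derivative_chebyshev_C (n : ℤ) :
    derivative (Chebyshev.C R n) = n * Chebyshev.S R (n - 1) := by
  induction n using Chebyshev.induct with
  | zero => simp
  | one => simp
  | add_two n ih₁ ih₂ =>
    have hC := congr_arg derivative (Chebyshev.C_add_two R n)
    have hS := Chebyshev.S_sub_one R n
    have hCS := Chebyshev.C_eq_S_sub_X_mul_S R (n + 1)
    simp only [derivative_sub, derivative_mul, derivative_X] at hC
    linear_combination (norm := (push_cast; ring_nf)) hC - ih₂ + X * ih₁ + hCS - n * hS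
  | neg_add_one n ih₁ ih₂ =>
    have hC := congr_arg derivative (Chebyshev.C_sub_one R (-n))
    have hS := Chebyshev.S_sub_two R (-n)
    have hCS := Chebyshev.C_eq_S_sub_X_mul_S R (-n)
    simp only [derivative_sub, derivative_mul, derivative_X] at hC
    linear_combination (norm := (push_cast; ring_nf)) hC - ih₂ + X * ih₁ + hCS + (n + 1) * hS

end Chebyshev

section Coefficients

theorem derivative_taylor {R : Type*} [CommSemiring R] (r : R) (f : R[X]) :
    derivative (taylor r f) = taylor r (derivative f) := by
  simp [taylor_apply, derivative_comp]

theorem choose_add_two_add_choose (n k : ℕ) :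
    (n + 2).choose (k + 2) + n.choose (k + 2) = n.choose k + 2 * (n + 1).choose (k + 2) := by
  simp only [Nat.choose_succ_succ']
  ring

theorem two_mul_add_one_mul_choose_add_choose (m k : ℕ) :
    (2 * k + 1) * ((m + k + 1).choose (2 * k + 1) + (m + k).choose (2 * k + 1)) =
      (2 * m + 1) * (m + k).choose (2 * k) := by
  have absorption := Nat.add_one_mul_choose_eq (m + k) (2 * k)
  have pascal := Nat.choose_succ_succ' (m + k) (2 * k)
  zify at absorption pascal ⊢
  linear_combination -2 * absorption - (2 * k + 1) * pascal

variable (R : Type*) [CommRing R]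

-- The index `n - 1` makes the formula uniform down to `S_{-1} = 0`.
theorem coeff_taylor_two_chebyshev_S_sub_one (n k : ℕ) :
    (taylor 2 (Chebyshev.S R (n - 1))).coeff k = (n + k).choose (2 * k + 1) := by
  induction n using Nat.twoStepInduction generalizing k with
  | zero => simp [Nat.choose_eq_zero_of_lt (show k < 2 * k + 1 by lia)]
  | one =>
    cases k with
    | zero => simp
    | succ k =>
      simp [coeff_one, Nat.choose_eq_zero_of_lt (show 1 + (k + 1) < 2 * (k + 1) + 1 by lia)]
  | more n ih₀ ih₁ =>
    have recurrence : taylor 2 (Chebyshev.S R ((n + 2 : ℕ) - 1)) =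
        (X + C 2) * taylor 2 (Chebyshev.S R ((n + 1 : ℕ) - 1)) -
          taylor 2 (Chebyshev.S R (n - 1)) := by
      rw [Nat.cast_add, Nat.cast_add, Nat.cast_ofNat, Nat.cast_one, add_sub_right_comm,
        add_sub_right_comm, Chebyshev.S_add_two, map_sub, taylor_mul, taylor_X]
    rw [recurrence, add_mul, coeff_sub, coeff_add, coeff_C_mul, ih₀, ih₁]
    cases k with
    | zero => simp; ring
    | succ k =>
      have pascal :=
        congr_arg (Nat.cast (R := R)) (choose_add_two_add_choose (n + k + 1) (2 * k + 1))
      rw [coeff_X_mul, ih₁]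
      push_cast at pascal ⊢
      linear_combination (norm := ring_nf) -pascal

theorem coeff_taylor_two_chebyshev_S (n k : ℕ) :
    (taylor 2 (Chebyshev.S R n)).coeff k = (n + k + 1).choose (2 * k + 1) := by
  simpa [add_right_comm] using coeff_taylor_two_chebyshev_S_sub_one R (n + 1) k

theorem coeff_taylor_two_chebyshev_S_sub_S (n k : ℕ) :
    (taylor 2 (Chebyshev.S R n - Chebyshev.S R (n - 1))).coeff k = (n + k).choose (2 * k) := by
  rw [map_sub, coeff_sub, coeff_taylor_two_chebyshev_S, coeff_taylor_two_chebyshev_S_sub_one,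
    Nat.choose_succ_succ', Nat.cast_add, add_sub_cancel_right]

theorem two_mul_add_one_mul_coeff_taylor_two_chebyshev_S_add_S (n k : ℕ) :
    (2 * k + 1) * (taylor 2 (Chebyshev.S R n + Chebyshev.S R (n - 1))).coeff k =
      (2 * n + 1) * (n + k).choose (2 * k) := by
  rw [map_add, coeff_add, coeff_taylor_two_chebyshev_S, coeff_taylor_two_chebyshev_S_sub_one]
  exact_mod_cast congr_arg (Nat.cast (R := R)) (two_mul_add_one_mul_choose_add_choose n k)

theorem coeff_succ_taylor_two_chebyshev_C_mul_add_one (n k : ℕ) :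
    (taylor 2 (Chebyshev.C R n)).coeff (k + 1) * (k + 1) = n * (n + k).choose (2 * k + 1) := by
  have derivative_eq : derivative (taylor 2 (Chebyshev.C R n)) =
      n * taylor 2 (Chebyshev.S R (n - 1)) := by
    rw [derivative_taylor, derivative_chebyshev_C]
    simp [taylor_apply]
  rw [← coeff_derivative, derivative_eq, coeff_natCast_mul,
    coeff_taylor_two_chebyshev_S_sub_one]

end Coefficients

theorem coeff_sum_C_mul_X_pow {R : Type*} [Semiring R] {s : Finset ℕ} {f : ℕ → R} {n : ℕ}
    (hf : n ∉ s → f n = 0) : (∑ k ∈ s, C (f k) * X ^ k).coeff n = f n := by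
  simpa [finsetSum_coeff, coeff_C_mul, coeff_X_pow, eq_comm] using hf

theorem calQ_eq_taylor (m : ℕ) : calQ m = taylor 2 (Chebyshev.S ℚ m) := by
  ext k
  rw [calQ, coeff_sum_C_mul_X_pow, coeff_taylor_two_chebyshev_S]
  intro hk
  rw [mem_range] at hk
  rw [Nat.choose_eq_zero_of_lt (by lia), Nat.cast_zero]

theorem calP_eq_taylor (m : ℕ) :
    calP m = taylor 2 (Chebyshev.S ℚ m - Chebyshev.S ℚ (m - 1)) := by
  ext k
  rw [calP, coeff_sum_C_mul_X_pow, coeff_taylor_two_chebyshev_S_sub_S]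
  intro hk
  rw [mem_range] at hk
  rw [Nat.choose_eq_zero_of_lt (by lia), Nat.cast_zero]

theorem Ppoly_eq_taylor (m : ℕ) :
    Ppoly m = taylor 2 (Chebyshev.S ℚ m + Chebyshev.S ℚ (m - 1)) := by
  ext k
  rw [Ppoly, coeff_sum_C_mul_X_pow]
  · have coeff_eq := two_mul_add_one_mul_coeff_taylor_two_chebyshev_S_add_S ℚ m k
    field_simp
    linear_combination -coeff_eq
  · intro hk
    rw [mem_range] at hk
    rw [Nat.choose_eq_zero_of_lt (by lia), Nat.cast_zero, mul_zero]

theorem Qpoly_eq_taylor (m : ℕ) : Qpoly m = taylor 2 (Chebyshev.C ℚ m) := by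
  ext k
  cases k with
  | zero => simp [Qpoly, coeff_X_pow]
  | succ k =>
    rw [Qpoly, coeff_add, coeff_C_succ, zero_add, coeff_sum_C_mul_X_pow]
    · have coeff_eq := coeff_succ_taylor_two_chebyshev_C_mul_add_one ℚ m k
      rw [← add_assoc, Nat.add_sub_cancel, show 2 * (k + 1) - 1 = 2 * k + 1 from rfl]
      push_cast
      field_simp
      linear_combination -coeff_eq
    · intro hk
      rw [mem_Icc] at hk
      rw [Nat.choose_eq_zero_of_lt (by lia), Nat.cast_zero, mul_zero]

theorem stmt_4 (m : ℕ) :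
    calQ (2 * m) = Ppoly m * calP m ∧
    calQ (2 * m + 1) = Qpoly (m + 1) * calQ m ∧
    (Qpoly m) ^ 2 = Qpoly (2 * m) + 2 := by
  simp only [Ppoly_eq_taylor, Qpoly_eq_taylor, calP_eq_taylor, calQ_eq_taylor, Nat.cast_add,
    Nat.cast_mul, Nat.cast_ofNat, Nat.cast_one]
  refine ⟨?_, ?_, ?_⟩
  · rw [chebyshev_S_two_mul, taylor_mul]
  · rw [chebyshev_S_two_mul_add_one, taylor_mul]
  · have taylor_two : taylor (2 : ℚ) 2 = 2 := taylor_C 2 2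
    rw [← taylor_pow, chebyshev_C_sq, map_add, taylor_two]
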